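/- Let 𝒟 = (D_0,…,D_m) be a D-flag of length m with gaps g_1 < … < g_m, and let 𝓜_top be a standard module with D_{𝓜_top} = D_m. Then there exists a flag of standard modules 𝓜_0 ⊆ 𝓜_1 ⊆ … ⊆ 𝓜_m = 𝓜_top with D_{𝓜_i} = D_i for all i if and only if dim_ℂ(𝓜̄^{(g_i)}/𝓜̄^{(g_i+1)}) = 1 for every 1 ≤ i ≤ m, where 𝓜̄ = 𝓜_top/𝔪𝓜_top and 𝓜̄^{(j)} is the image of 𝓜_top ∩ z^j𝒪 in 𝓜̄. -/

import Mathlib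

open PowerSeries

noncomputable section

/-- `𝒪 = ℂ⟦z⟧`, the ring of formal power series over `ℂ`. -/
abbrev 𝒪 : Type := PowerSeries ℂ

/-- `ν(f)`: the order of a power series (least `n` with nonzero coefficient);
only meaningful for `f ≠ 0`. -/
noncomputable def ord (f : 𝒪) : ℕ := sInf {n : ℕ | PowerSeries.coeff n f ≠ 0}

/-- The value semigroup `Γ = {ν(x) : 0 ≠ x ∈ ℛ}` of a subalgebra `ℛ ⊆ 𝒪`. -/
def SGamma (R : Subalgebra ℂ 𝒪) : Set ℕ := {n | ∃ x ∈ R, x ≠ (0:𝒪) ∧ ord x = n}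

/-- The set of gaps `G = ℕ ∖ Γ`. -/
def Gaps (R : Subalgebra ℂ 𝒪) : Set ℕ := (SGamma R)ᶜ

/-- `Δ` is a `Γ`-module: `Γ + Δ ⊆ Δ`. -/
def IsGammaModule (Γ Δ : Set ℕ) : Prop := ∀ a ∈ Γ, ∀ d ∈ Δ, a + d ∈ Δ

/-- `Δ_𝓜 = {ν(x) : 0 ≠ x ∈ 𝓜}` for an `ℛ`-submodule `𝓜 ⊆ 𝒪`. -/
def DeltaM (R : Subalgebra ℂ 𝒪) (M : Submodule ↥R 𝒪) : Set ℕ :=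
  {n | ∃ x ∈ M, x ≠ (0:𝒪) ∧ ord x = n}

/-- `D_𝓜 = Δ_𝓜 ∩ G`, the set of added gaps. -/
def Dset (R : Subalgebra ℂ 𝒪) (M : Submodule ↥R 𝒪) : Set ℕ := DeltaM R M ∩ Gaps R

/-- A standard module: a finitely generated `ℛ`-submodule of `𝒪` containing an
element of order `0`. -/
def IsStd (R : Subalgebra ℂ 𝒪) (M : Submodule ↥R 𝒪) : Prop :=
  M.FG ∧ ∃ x ∈ M, x ≠ (0:𝒪) ∧ ord x = 0

/-- `c ≥ 1` is the conductor of `ℛ`: the minimal exponent with `z^c𝒪 ⊆ ℛ`. -/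
def HasConductor (R : Subalgebra ℂ 𝒪) (c : ℕ) : Prop :=
  1 ≤ c ∧ (∀ f : 𝒪, (PowerSeries.X : 𝒪)^c * f ∈ R) ∧
    ∀ c' : ℕ, (∀ f : 𝒪, (PowerSeries.X : 𝒪)^c' * f ∈ R) → c ≤ c'

/-- `z^j𝒪` as a `ℂ`-submodule of `𝒪`. -/
def zO (j : ℕ) : Submodule ℂ 𝒪 :=
  LinearMap.range (LinearMap.mulLeft ℂ ((PowerSeries.X : 𝒪)^j))

/-- `𝔪𝓜` as a `ℂ`-submodule of `𝒪`, where `𝔪 = {x ∈ ℛ : x = 0 or ν(x) > 0}`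
is the maximal ideal of `ℛ`. -/
def mSmul (R : Subalgebra ℂ 𝒪) (M : Submodule ↥R 𝒪) : Submodule ℂ 𝒪 :=
  Submodule.span ℂ {z : 𝒪 | ∃ r ∈ (R : Set 𝒪), ∃ y ∈ M, (r = 0 ∨ 0 < ord r) ∧ z = r * y}

/-- `dim_ℂ (A / B)` for `ℂ`-subspaces; intended for `B ≤ A`. -/
noncomputable def quotDim (A B : Submodule ℂ 𝒪) : ℕ :=
  Module.finrank ℂ (↥A ⧸ Submodule.comap A.subtype B)

/-- `D_i = D_0 ∪ {g_1, …, g_i}` (the gaps `g` are indexed by `1, …, m`). -/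
def DFlagSet (D0 : Set ℕ) (g : ℕ → ℕ) (i : ℕ) : Set ℕ := D0 ∪ g '' Set.Icc 1 i

/-- `(D_0, …, D_m)` with `D_i = D_0 ∪ {g_1 < … < g_i}` is a `D`-flag:
all `Δ_i = Γ ∪ D_i` are `Γ`-modules. -/
def IsDFlag (R : Subalgebra ℂ 𝒪) (m : ℕ) (D0 : Set ℕ) (g : ℕ → ℕ) : Prop :=
  D0 ⊆ Gaps R ∧ StrictMonoOn g (Set.Icc 1 m) ∧
  (∀ i, 1 ≤ i → i ≤ m → g i ∈ Gaps R \ D0) ∧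
  (∀ i ≤ m, IsGammaModule (SGamma R) (SGamma R ∪ DFlagSet D0 g i))

/-- A `D`-flag is admissible if it is realized by a flag of standard modules. -/
def IsAdmissibleFlag (R : Subalgebra ℂ 𝒪) (m : ℕ) (D0 : Set ℕ) (g : ℕ → ℕ) : Prop :=
  ∃ MM : ℕ → Submodule ↥R 𝒪, (∀ i, i < m → MM i ≤ MM (i+1)) ∧
    ∀ i ≤ m, IsStd R (MM i) ∧ Dset R (MM i) = DFlagSet D0 g i

/-- The subalgebra `ℂ[z^a, z^b + z^c] + z^N ℂ⟦z⟧` of `𝒪`. -/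
def Rring (a b c N : ℕ) : Subalgebra ℂ 𝒪 where
  carrier := {f : 𝒪 | ∃ p ∈ Algebra.adjoin ℂ
      ({(PowerSeries.X : 𝒪)^a, (PowerSeries.X : 𝒪)^b + (PowerSeries.X : 𝒪)^c} : Set 𝒪),
    ∃ g : 𝒪, f = p + (PowerSeries.X : 𝒪)^N * g}
  mul_mem' := by
    rintro x y ⟨p, hp, gx, rfl⟩ ⟨q, hq, gy, rfl⟩
    exact ⟨p * q, mul_mem hp hq,
      p * gy + gx * q + (PowerSeries.X : 𝒪)^N * (gx * gy), by ring⟩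
  one_mem' := ⟨1, one_mem _, 0, by ring⟩
  add_mem' := by
    rintro x y ⟨p, hp, gx, rfl⟩ ⟨q, hq, gy, rfl⟩
    exact ⟨p + q, add_mem hp hq, gx + gy, by ring⟩
  zero_mem' := ⟨0, zero_mem _, 0, by ring⟩
  algebraMap_mem' := fun r => ⟨algebraMap ℂ 𝒪 r, Subalgebra.algebraMap_mem _ r, 0, by ring⟩

/-- The ring `ℂ⟦z^4, z^{2u}+z^v⟧ = ℂ[z^4, z^{2u}+z^v] + z^{4u+v}ℂ⟦z⟧` for the
plane curve singularity with Puiseux exponents `(4, 2u, v)`. -/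
def Rcal (u v : ℕ) : Subalgebra ℂ 𝒪 := Rring 4 (2*u) v (4*u+v)

/-- The gap counting function `γ_Δ(ℓ) = |[ℓ,∞) ∖ Δ|`. -/
noncomputable def gapCount (Δ : Set ℕ) (ℓ : ℕ) : ℕ := Set.ncard {k : ℕ | ℓ ≤ k ∧ k ∉ Δ}

/-- `n = n(D)`: the smallest odd number in `(Δ ∪ {v}) ∩ [2u, ∞)`. -/
noncomputable def nOdd (u v : ℕ) (Δ : Set ℕ) : ℕ :=
  sInf {k : ℕ | Odd k ∧ 2*u ≤ k ∧ (k ∈ Δ ∨ k = v)}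

/-- The dimension change `μ_{D,g}` of Theorem `dimprop` (for the family `(4,2u,v)`),
where `Γ` is the value semigroup. -/
noncomputable def muDim (u v : ℕ) (Γ : Set ℕ) (D : Set ℕ) (gp : ℕ) : ℕ :=
  let Δ : Set ℕ := Γ ∪ D
  let Δ' : Set ℕ := Δ ∪ {gp}
  let n : ℕ := nOdd u v Δ
  if gp % 4 = 2 then
    (gapCount Δ' gp - gapCount Δ' (gp+4)) - (gapCount Δ' (gp+n) - gapCount Δ' (gp+4+n))
  else gapCount Δ' gp - gapCount Δ' (gp+4)

/-!
If `𝓝 ⊆ 𝓜` have the same orders below `n`, cancelling leading terms gives `𝓜 ⊆ 𝓝 + z^n𝒪`, hence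
`𝔪𝓜 ⊆ 𝓝 + z^(n+1)𝒪`, so an order `n` of `𝔪𝓜` is already an order of `𝓝`. Taking `n = g_i` and
`𝓝 = 𝓜_{i-1}`, a flag can exist only if no `g_i` is an order of `𝔪𝓜_top`. Conversely, if no `g_i` is
an order of `𝔪𝓜_top`, then `𝓜_i` can be taken to be `𝔪𝓜_top` plus the span of elements of `𝓜_top`,
one for each order in `Γ ∪ D_i` that `𝔪𝓜_top` misses. Finally, `𝓜̄^(n) / 𝓜̄^(n+1)` is spanned by the
class of any element of `𝓜` of order `n`, and this class vanishes exactly when `n` is an order of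
`𝔪𝓜`.
-/

lemma finrank_quotient_eq_one_iff_covBy {K V : Type*} [Field K] [AddCommGroup V]
    [Module K V] {A B : Submodule K V} (hBA : B ≤ A) :
    Module.finrank K (A ⧸ B.submoduleOf A) = 1 ↔ B ⋖ A := by
  rw [covBy_iff_quot_is_simple hBA, isSimpleModule_iff_finrank_eq_one]
  rfl

section PowerSeries

variable {K : Type*} [Field K] {x y : K⟦X⟧} {n : ℕ}

lemma order_eq_iff_X_pow_dvd : x.order = n ↔ X ^ n ∣ x ∧ ¬ X ^ (n + 1) ∣ x := by
  rw [order_eq_emultiplicity_X, emultiplicity_eq_coe]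

lemma exists_X_pow_succ_dvd_sub_smul (hx : x.order = n) (hy : X ^ n ∣ y) :
    ∃ a : K, X ^ (n + 1) ∣ y - a • x := by
  obtain ⟨hxn, hx⟩ := order_eq_nat.1 hx
  rw [X_pow_dvd_iff] at hy
  refine ⟨coeff n y / coeff n x, X_pow_dvd_iff.2 fun k hk => ?_⟩
  rw [map_sub, coeff_smul, smul_eq_mul]
  rcases Nat.lt_succ_iff_lt_or_eq.1 hk with hk | rfl
  · rw [hx k hk, hy k hk, mul_zero, sub_zero]
  · rw [div_mul_cancel₀ _ hxn, sub_self]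

lemma order_smul_of_ne_zero {a : K} (ha : a ≠ 0) (x : K⟦X⟧) : (a • x).order = x.order := by
  refine le_antisymm ?_ le_order_smul
  simpa only [inv_smul_smul₀ ha] using le_order_smul (a := a⁻¹) (φ := a • x)

end PowerSeries

section OrderSet

variable {K : Type*} [Field K]

/-- The set of finite orders of the elements of `S`; for a subalgebra `ℛ` it is the value semigroup
`Γ`, and for an `ℛ`-module `𝓜` it is `Δ_𝓜`. Since `PowerSeries.order 0 = ⊤`, the element `0` does
not contribute. -/
def orderSet {A : Type*} [SetLike A K⟦X⟧] (S : A) : Set ℕ := {n | ∃ x : K⟦X⟧, x ∈ S ∧ x.order = n}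

lemma orderSet_mono {A : Type*} [SetLike A K⟦X⟧] {S T : A} (h : ∀ x ∈ S, x ∈ T) :
    orderSet S ⊆ orderSet T :=
  fun _ ⟨x, hx, hxn⟩ => ⟨x, h x hx, hxn⟩

lemma orderSet_span_singleton_sup {W : Submodule K K⟦X⟧} {e : K⟦X⟧} {n : ℕ}
    (he : e.order = n) (hn : n ∉ orderSet W) :
    orderSet (Submodule.span K {e} ⊔ W) = insert n (orderSet W) := by
  refine Set.Subset.antisymm ?_ (Set.insert_subset ?_ (orderSet_mono ?_))
  · rintro k ⟨x, hx, hxk⟩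
    obtain ⟨a, w, hw, rfl⟩ : ∃ a : K, ∃ w ∈ W, a • e + w = x := by
      simpa only [Submodule.mem_sup, Submodule.mem_span_singleton, exists_exists_eq_and] using hx
    rcases eq_or_ne a 0 with rfl | ha
    · exact Or.inr ⟨w, hw, by rwa [zero_smul, zero_add] at hxk⟩
    · have hae : (a • e).order = n := by rw [order_smul_of_ne_zero ha, he]
      have hne : (a • e).order ≠ w.order := fun h => hn ⟨w, hw, h.symm.trans hae⟩
      rw [order_add_of_order_ne _ _ hne, hae] at hxk
      rcases min_choice (n : ℕ∞) w.order with h | h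
      · exact Or.inl (Nat.cast_injective (hxk.symm.trans h))
      · exact Or.inr ⟨w, hw, h.symm.trans hxk⟩
  · exact ⟨e, Submodule.mem_sup_left (Submodule.mem_span_singleton_self e), he⟩
  · exact fun _ => Submodule.mem_sup_right

lemma orderSet_span_image_sup {W : Submodule K K⟦X⟧} {e : ℕ → K⟦X⟧} {T : Set ℕ} (hT : T.Finite)
    (he : ∀ n ∈ T, (e n).order = n) (hdisj : Disjoint T (orderSet W)) :
    orderSet (Submodule.span K (e '' T) ⊔ W) = T ∪ orderSet W := by
  induction T, hT using Set.Finite.induction_on with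
  | empty => simp only [Set.image_empty, Submodule.span_empty, bot_sup_eq, Set.empty_union]
  | @insert n T hn _ ih =>
    obtain ⟨hnW, hTW⟩ := Set.disjoint_insert_left.1 hdisj
    have ih := ih (fun k hk => he k (Set.mem_insert_of_mem n hk)) hTW
    have hnTW : n ∉ orderSet (Submodule.span K (e '' T) ⊔ W) := by
      rw [ih]
      exact not_or.2 ⟨hn, hnW⟩
    rw [Set.image_insert_eq, Submodule.span_insert, sup_assoc,
      orderSet_span_singleton_sup (he n (Set.mem_insert n T)) hnTW, ih, Set.insert_union]

end OrderSet

section Modules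

variable {K : Type*} [Field K] {R : Subalgebra K K⟦X⟧} {M N : Submodule R K⟦X⟧} {n : ℕ}

lemma orderSet_subset_of_zero_mem (h0 : 0 ∈ orderSet M) :
    orderSet R ⊆ orderSet M := by
  rintro n ⟨r, hr, hrn⟩
  obtain ⟨x, hx, hx0⟩ := h0
  exact ⟨r * x, M.smul_mem ⟨r, hr⟩ hx, by rw [order_mul, hrn, hx0, Nat.cast_zero, add_zero]⟩

variable (R) in
/-- `z^n𝒪` as an `ℛ`-submodule of `𝒪`. -/
def orderGE (n : ℕ) : Submodule R K⟦X⟧ := (Ideal.span {X ^ n}).restrictScalars R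

lemma mem_orderGE {x : K⟦X⟧} : x ∈ orderGE R n ↔ X ^ n ∣ x :=
  Ideal.mem_span_singleton

variable (R) in
/-- The maximal ideal `𝔪` of `ℛ`, cut out by divisibility by `z` in `𝒪`. -/
def maxIdeal : Ideal R := (Ideal.span {(X : K⟦X⟧)}).comap R.val

lemma mem_maxIdeal {r : R} : r ∈ maxIdeal R ↔ X ∣ (r : K⟦X⟧) :=
  Ideal.mem_span_singleton

lemma sub_algebraMap_constantCoeff_mem_maxIdeal (r : R) :
    r - algebraMap K R (constantCoeff (r : K⟦X⟧)) ∈ maxIdeal R := by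
  rw [mem_maxIdeal, X_dvd_iff]
  simp

lemma maxIdeal_smul_orderGE_le : maxIdeal R • orderGE R n ≤ orderGE R (n + 1) := by
  refine Submodule.smul_le.2 fun r hr x hx => mem_orderGE.2 ?_
  rw [pow_succ', Subalgebra.smul_def, smul_eq_mul]
  exact mul_dvd_mul (mem_maxIdeal.1 hr) (mem_orderGE.1 hx)

lemma mem_orderSet_of_mem_sup_orderGE (h : n ∈ orderSet (N ⊔ orderGE R (n + 1))) :
    n ∈ orderSet N := by
  obtain ⟨_, hx, hxn⟩ := h
  obtain ⟨y, hy, z, hz, rfl⟩ := Submodule.mem_sup.1 hx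
  rw [mem_orderGE] at hz
  rw [order_eq_iff_X_pow_dvd] at hxn
  refine ⟨y, hy, order_eq_iff_X_pow_dvd.2 ?_⟩
  rwa [dvd_add_left hz, dvd_add_left ((pow_dvd_pow X n.le_succ).trans hz)] at hxn

/-- Cancelling leading terms degree by degree. -/
lemma le_sup_orderGE (hNM : N ≤ M)
    (h : ∀ k < n, k ∈ orderSet M → k ∈ orderSet N) :
    M ≤ N ⊔ orderGE R n := by
  induction n with
  | zero =>
    exact fun x _ => Submodule.mem_sup_right (mem_orderGE.2 (by rw [pow_zero]; exact one_dvd x))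
  | succ n ih =>
    have hstep : orderGE R n ⊓ M ≤ N ⊔ orderGE R (n + 1) := by
      rintro y ⟨hy, hyM⟩
      rw [SetLike.mem_coe, mem_orderGE] at hy
      by_cases hyn : X ^ (n + 1) ∣ y
      · exact Submodule.mem_sup_right (mem_orderGE.2 hyn)
      · obtain ⟨x, hx, hxn⟩ := h n n.lt_succ_self ⟨y, hyM, order_eq_iff_X_pow_dvd.2 ⟨hy, hyn⟩⟩
        obtain ⟨a, ha⟩ := exists_X_pow_succ_dvd_sub_smul hxn hy
        rw [← add_sub_cancel (a • x) y]
        exact Submodule.add_mem_sup (N.smul_of_tower_mem a hx) (mem_orderGE.2 ha)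
    calc M ≤ (N ⊔ orderGE R n) ⊓ M := le_inf (ih fun k hk => h k (hk.trans n.lt_succ_self)) le_rfl
      _ = N ⊔ orderGE R n ⊓ M := sup_inf_assoc_of_le _ hNM
      _ ≤ N ⊔ orderGE R (n + 1) := sup_le le_sup_left hstep

lemma eq_of_le_of_orderSet_subset (hNM : N ≤ M) (hN : orderGE R n ≤ N)
    (h : ∀ k < n, k ∈ orderSet M → k ∈ orderSet N) : N = M :=
  le_antisymm hNM ((le_sup_orderGE hNM h).trans (sup_le le_rfl hN))

lemma mem_orderSet_of_mem_orderSet_maxIdeal_smul (hNM : N ≤ M)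
    (h : ∀ k < n, k ∈ orderSet M → k ∈ orderSet N)
    (hn : n ∈ orderSet (maxIdeal R • M)) : n ∈ orderSet N := by
  have hle : maxIdeal R • M ≤ N ⊔ orderGE R (n + 1) := calc maxIdeal R • M
    _ ≤ maxIdeal R • (N ⊔ orderGE R n) := smul_mono_right _ (le_sup_orderGE hNM h)
    _ = maxIdeal R • N ⊔ maxIdeal R • orderGE R n := Submodule.smul_sup _ _ _
    _ ≤ N ⊔ orderGE R (n + 1) := sup_le_sup Submodule.smul_le_right maxIdeal_smul_orderGE_le
  exact mem_orderSet_of_mem_sup_orderGE (orderSet_mono hle hn)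

section Conductor

variable {c : ℕ} (hc : ∀ f : K⟦X⟧, X ^ c * f ∈ R)
include hc

lemma orderGE_succ_le_maxIdeal_smul (h0 : 0 ∈ orderSet M) :
    orderGE R (c + 1) ≤ maxIdeal R • M := by
  intro x hx
  obtain ⟨f, rfl⟩ := mem_orderGE.1 hx
  obtain ⟨u, hu, hu0⟩ := h0
  have hunit : IsUnit u := by
    rw [isUnit_iff_constantCoeff, isUnit_iff_ne_zero, ← coeff_zero_eq_constantCoeff_apply]
    exact (order_eq_nat.1 hu0).1
  obtain ⟨v, hv⟩ := hunit.exists_left_inv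
  have hr : (⟨X ^ c * (X * (f * v)), hc _⟩ : R) ∈ maxIdeal R :=
    mem_maxIdeal.2 ((dvd_mul_right X (f * v)).mul_left (X ^ c))
  have heq : X ^ (c + 1) * f = X ^ c * (X * (f * v)) * u := by
    linear_combination -X ^ (c + 1) * f * hv
  rw [heq]
  exact Submodule.smul_mem_smul hr hu

lemma fg_of_zero_mem_orderSet (h0 : 0 ∈ orderSet M) : M.FG := by
  choose! e heM he using fun n (hn : n ∈ orderSet M) => hn
  set T := orderSet M ∩ Set.Iio (c + 1)
  have hle : Submodule.span R (e '' T) ≤ M :=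
    Submodule.span_le.2 (Set.image_subset_iff.2 fun n hn => heM n hn.1)
  have hmem : ∀ n < c + 1, n ∈ orderSet M →
      n ∈ orderSet (Submodule.span R (e '' T)) := fun n hnc hn =>
    ⟨e n, Submodule.subset_span (Set.mem_image_of_mem e ⟨hn, hnc⟩), he n hn⟩
  have hlarge : orderGE R (c + 1) ≤ Submodule.span R (e '' T) :=
    (orderGE_succ_le_maxIdeal_smul hc (hmem 0 c.succ_pos h0)).trans Submodule.smul_le_right
  rw [← eq_of_le_of_orderSet_subset hle hlarge hmem]
  exact Submodule.fg_span (((Set.finite_Iio (c + 1)).inter_of_right _).image e)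

end Conductor

/-- `ℛ = K + 𝔪` acts on `𝓜 / 𝔪𝓜` through `K`. -/
lemma exists_restrictScalars_eq {W : Submodule K K⟦X⟧}
    (hmW : (maxIdeal R • M).restrictScalars K ≤ W) (hWM : W ≤ M.restrictScalars K) :
    ∃ N : Submodule R K⟦X⟧, N.restrictScalars K = W := by
  have hsmul (r : R) (x : K⟦X⟧) (hx : x ∈ W) : r • x ∈ W := by
    have hsub := Submodule.smul_mem_smul (sub_algebraMap_constantCoeff_mem_maxIdeal r)
      (show x ∈ M from hWM hx)
    rw [← sub_add_cancel r (algebraMap K R (constantCoeff (r : K⟦X⟧))), add_smul, algebraMap_smul]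
    exact W.add_mem (hmW hsub) (W.smul_mem _ hx)
  exact ⟨{ W with smul_mem' := hsmul }, rfl⟩

/-- With one element `e n` of `𝓜` chosen for each order `n`, take for `F T` the sum of `𝔪𝓜` and the
span of the `e n` with `n ∈ T` not an order of `𝔪𝓜`: then no leading terms can cancel. -/
lemma exists_monotone_orderSet_eq_union {c : ℕ} (hc : ∀ f : K⟦X⟧, X ^ c * f ∈ R)
    (h0 : 0 ∈ orderSet M) :
    ∃ F : Set ℕ → Submodule R K⟦X⟧, Monotone F ∧ F (orderSet M) = M ∧
      ∀ T ⊆ orderSet M, orderSet (F T) = T ∪ orderSet (maxIdeal R • M) := by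
  choose! e heM he using fun n (hn : n ∈ orderSet M) => hn
  set Δm := orderSet (maxIdeal R • M)
  set W : Set ℕ → Submodule K K⟦X⟧ := fun T =>
    Submodule.span K (e '' ((T ∩ orderSet M) \ Δm)) ⊔ (maxIdeal R • M).restrictScalars K
  have hlarge : orderGE R (c + 1) ≤ maxIdeal R • M := orderGE_succ_le_maxIdeal_smul hc h0
  have hfin : Δmᶜ.Finite := (Set.finite_Iio (c + 1)).subset fun n hn => by
    by_contra hnc
    exact hn ⟨X ^ n, hlarge (mem_orderGE.2 (pow_dvd_pow X (not_lt.1 hnc))), order_X_pow n⟩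
  have hWM : ∀ T, W T ≤ M.restrictScalars K := fun T => sup_le
    (Submodule.span_le.2 (Set.image_subset_iff.2 fun n hn => heM n hn.1.2))
    (Submodule.smul_le_right (I := maxIdeal R) (N := M))
  have hmW : ∀ T, (maxIdeal R • M).restrictScalars K ≤ W T := fun T => le_sup_right
  choose F hF using fun T => exists_restrictScalars_eq (hmW T) (hWM T)
  have horder : ∀ T ⊆ orderSet M, orderSet (F T) = T ∪ Δm := fun T hT => by
    have hWT : orderSet (W T) = (T ∩ orderSet M) \ Δm ∪ Δm :=
      orderSet_span_image_sup (hfin.subset fun n hn => hn.2) (fun n hn => he n hn.1.2)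
        Set.disjoint_sdiff_left
    calc orderSet (F T) = orderSet (W T) := by rw [← hF]; rfl
      _ = T ∪ Δm := by rw [hWT, Set.inter_eq_left.2 hT, Set.sdiff_union_self]
  have hle : ∀ T, F T ≤ M := fun T => (Submodule.restrictScalars_le (S := K)).1 (hF T ▸ hWM T)
  have hmF : ∀ T, maxIdeal R • M ≤ F T := fun T =>
    (Submodule.restrictScalars_le (S := K)).1 (hF T ▸ hmW T)
  refine ⟨F, fun S T hST => ?_, ?_, horder⟩
  · rw [← Submodule.restrictScalars_le (S := K), hF, hF]
    exact sup_le_sup_right (Submodule.span_mono (Set.image_mono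
      (Set.sdiff_subset_sdiff_left (Set.inter_subset_inter_left _ hST)))) _
  · refine eq_of_le_of_orderSet_subset (hle _) (hlarge.trans (hmF _)) fun k _ hk => ?_
    rw [horder _ subset_rfl]
    exact Or.inl hk

variable (M) in
/-- The preimage in `𝓜` of `𝓜̄^{(n)}`, the image of `𝓜 ∩ z^n𝒪` in `𝓜̄ = 𝓜 / 𝔪𝓜`. -/
def orderFiltration (n : ℕ) : Submodule K K⟦X⟧ :=
  (M ⊓ orderGE R n ⊔ maxIdeal R • M).restrictScalars K

lemma orderFiltration_eq_span_sup {x : K⟦X⟧} (hxM : x ∈ M) (hx : x.order = n) :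
    orderFiltration M n = Submodule.span K {x} ⊔ orderFiltration M (n + 1) := by
  refine le_antisymm (fun y hy => ?_) (sup_le ?_ ?_)
  · obtain ⟨p, ⟨hpM, hp⟩, q, hq, rfl⟩ := Submodule.mem_sup.1 hy
    obtain ⟨a, ha⟩ := exists_X_pow_succ_dvd_sub_smul hx (mem_orderGE.1 hp)
    rw [show p + q = a • x + ((p - a • x) + q) by ring]
    exact Submodule.add_mem_sup (Submodule.smul_mem _ a (Submodule.mem_span_singleton_self x))
      (Submodule.add_mem_sup ⟨M.sub_mem hpM (M.smul_of_tower_mem a hxM), mem_orderGE.2 ha⟩ hq)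
  · rw [Submodule.span_singleton_le_iff_mem]
    exact Submodule.mem_sup_left ⟨hxM, mem_orderGE.2 (order_eq_iff_X_pow_dvd.1 hx).1⟩
  · exact sup_le_sup_right (inf_le_inf_left M fun y hy =>
      mem_orderGE.2 ((pow_dvd_pow X n.le_succ).trans (mem_orderGE.1 hy))) _

lemma mem_orderFiltration_succ_iff {x : K⟦X⟧} (hxM : x ∈ M) (hx : x.order = n) :
    x ∈ orderFiltration M (n + 1) ↔ n ∈ orderSet (maxIdeal R • M) := by
  constructor
  · intro h
    have hle : M ⊓ orderGE R (n + 1) ⊔ maxIdeal R • M ≤ maxIdeal R • M ⊔ orderGE R (n + 1) :=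
      sup_le (inf_le_right.trans le_sup_right) le_sup_left
    exact mem_orderSet_of_mem_sup_orderGE ⟨x, hle h, hx⟩
  · rintro ⟨y, hy, hyn⟩
    obtain ⟨a, ha⟩ := exists_X_pow_succ_dvd_sub_smul hyn (order_eq_iff_X_pow_dvd.1 hx).1
    rw [← sub_add_cancel x (a • y)]
    have hyM : y ∈ M := Submodule.smul_le_right hy
    exact Submodule.add_mem_sup ⟨M.sub_mem hxM (M.smul_of_tower_mem a hyM), mem_orderGE.2 ha⟩
      (Submodule.smul_of_tower_mem _ a hy)

theorem finrank_orderFiltration_quotient_eq_one_iff (hn : n ∈ orderSet M) :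
    Module.finrank K (orderFiltration M n ⧸
      (orderFiltration M (n + 1)).submoduleOf (orderFiltration M n)) = 1 ↔
    n ∉ orderSet (maxIdeal R • M) := by
  obtain ⟨x, hxM, hx⟩ := hn
  have hspan := orderFiltration_eq_span_sup hxM hx
  rw [finrank_quotient_eq_one_iff_covBy (hspan ▸ le_sup_right),
    ← mem_orderFiltration_succ_iff hxM hx, hspan]
  refine ⟨fun hcov hmem => hcov.ne ?_, Submodule.covBy_span_singleton_sup⟩
  exact (sup_eq_right.2 ((Submodule.span_singleton_le_iff_mem _ _).2 hmem)).symm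

end Modules

section Flags

variable {D0 : Set ℕ} {g : ℕ → ℕ} {i j m : ℕ}

lemma DFlagSet_mono (hij : i ≤ j) : DFlagSet D0 g i ⊆ DFlagSet D0 g j :=
  Set.union_subset_union_right D0 (Set.image_mono (Set.Icc_subset_Icc_right hij))

lemma notMem_DFlagSet_of_lt (hg : StrictMonoOn g (Set.Icc 1 m))
    (hgD : ∀ i, 1 ≤ i → i ≤ m → g i ∉ D0) (hij : i < j) (hjm : j ≤ m) :
    g j ∉ DFlagSet D0 g i := by
  rintro (h | ⟨k, ⟨hk1, hki⟩, hk⟩)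
  · exact hgD j (by omega) hjm h
  · exact (hg ⟨hk1, by omega⟩ ⟨by omega, hjm⟩ (show k < j by omega)).ne hk

lemma mem_DFlagSet_of_lt (hg : StrictMonoOn g (Set.Icc 1 m)) {n : ℕ} (him : i < m)
    (hn : n ∈ DFlagSet D0 g m) (hng : n < g (i + 1)) : n ∈ DFlagSet D0 g i := by
  rcases hn with h | ⟨k, ⟨hk1, hkm⟩, rfl⟩
  · exact Or.inl h
  · have hki := (hg.lt_iff_lt ⟨hk1, hkm⟩ ⟨by omega, him⟩).1 hng
    exact Or.inr ⟨k, ⟨hk1, Nat.lt_succ_iff.1 hki⟩, rfl⟩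

variable {K : Type*} [Field K] {R : Subalgebra K K⟦X⟧} {M : Submodule R K⟦X⟧}

lemma notMem_orderSet_maxIdeal_smul_of_le {N : Submodule R K⟦X⟧}
    (hg : StrictMonoOn g (Set.Icc 1 m)) (hgD : ∀ i, 1 ≤ i → i ≤ m → g i ∉ D0)
    (him : i < m) (hNM : N ≤ M) (hN0 : 0 ∈ orderSet N)
    (hM : orderSet M \ orderSet R = DFlagSet D0 g m)
    (hN : orderSet N \ orderSet R = DFlagSet D0 g i) :
    g (i + 1) ∉ orderSet (maxIdeal R • M) := by
  intro hgm
  have hbelow : ∀ k < g (i + 1), k ∈ orderSet M → k ∈ orderSet N := fun k hk hkM => by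
    by_cases hkR : k ∈ orderSet R
    · exact orderSet_subset_of_zero_mem hN0 hkR
    · exact (hN.ge (mem_DFlagSet_of_lt hg him (hM.le ⟨hkM, hkR⟩) hk)).1
  have hgN : g (i + 1) ∈ orderSet N := mem_orderSet_of_mem_orderSet_maxIdeal_smul hNM hbelow hgm
  have hgR : g (i + 1) ∉ orderSet R :=
    (hM.ge (Or.inr ⟨i + 1, ⟨by omega, him⟩, rfl⟩ : g (i + 1) ∈ DFlagSet D0 g m)).2
  exact notMem_DFlagSet_of_lt hg hgD i.lt_succ_self him (hN.le ⟨hgN, hgR⟩)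

lemma exists_flag_of_notMem_orderSet_maxIdeal_smul {c : ℕ} (hc : ∀ f : K⟦X⟧, X ^ c * f ∈ R)
    (h0 : 0 ∈ orderSet M) (hM : orderSet M \ orderSet R = DFlagSet D0 g m)
    (hgm : ∀ i, 1 ≤ i → i ≤ m → g i ∉ orderSet (maxIdeal R • M)) :
    ∃ MM : ℕ → Submodule R K⟦X⟧, Monotone MM ∧ MM m = M ∧
      ∀ i ≤ m, ((MM i).FG ∧ 0 ∈ orderSet (MM i)) ∧
        orderSet (MM i) \ orderSet R = DFlagSet D0 g i := by
  obtain ⟨F, hFmono, hFM, hF⟩ := exists_monotone_orderSet_eq_union hc h0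
  have hRM : orderSet R ⊆ orderSet M := orderSet_subset_of_zero_mem h0
  have hunion : orderSet R ∪ DFlagSet D0 g m = orderSet M := by
    rw [← hM, Set.union_sdiff_cancel hRM]
  have hm : orderSet (maxIdeal R • M) ⊆ orderSet R ∪ D0 := fun k hk => by
    have hkM : k ∈ orderSet M :=
      orderSet_mono (show maxIdeal R • M ≤ M from Submodule.smul_le_right) hk
    rw [← hunion] at hkM
    rcases hkM with hkR | hkD | ⟨j, hj, rfl⟩
    · exact Or.inl hkR
    · exact Or.inr hkD
    · exact absurd hk (hgm j hj.1 hj.2)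
  have horder : ∀ i ≤ m,
      orderSet (F (orderSet R ∪ DFlagSet D0 g i)) = orderSet R ∪ DFlagSet D0 g i := fun i hi => by
    rw [hF _ ((Set.union_subset_union_right _ (DFlagSet_mono hi)).trans hunion.le)]
    exact Set.union_eq_left.2
      (hm.trans (Set.union_subset_union_right _ Set.subset_union_left))
  refine ⟨fun i => F (orderSet R ∪ DFlagSet D0 g i), fun i j hij =>
    hFmono (Set.union_subset_union_right _ (DFlagSet_mono hij)), (congrArg F hunion).trans hFM,
    fun i hi => ?_⟩
  have hdisj : Disjoint (orderSet R) (DFlagSet D0 g i) :=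
    (Set.disjoint_sdiff_right.mono_right hM.ge).mono_right (DFlagSet_mono hi)
  have hzero : 0 ∈ orderSet (F (orderSet R ∪ DFlagSet D0 g i)) := by
    rw [horder i hi]
    exact Or.inl ⟨1, R.one_mem, order_one⟩
  refine ⟨⟨fg_of_zero_mem_orderSet hc hzero, hzero⟩, ?_⟩
  rw [horder i hi, Set.union_sdiff_left, sdiff_eq_left.2 hdisj.symm]

theorem statement9_general {c : ℕ} (hc : ∀ f : K⟦X⟧, X ^ c * f ∈ R)
    (hg : StrictMonoOn g (Set.Icc 1 m)) (hgD : ∀ i, 1 ≤ i → i ≤ m → g i ∉ D0)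
    (h0 : 0 ∈ orderSet M) (hM : orderSet M \ orderSet R = DFlagSet D0 g m) :
    (∃ MM : ℕ → Submodule R K⟦X⟧,
      (∀ i, i < m → MM i ≤ MM (i + 1)) ∧ MM m = M ∧
      ∀ i ≤ m, ((MM i).FG ∧ 0 ∈ orderSet (MM i)) ∧
        orderSet (MM i) \ orderSet R = DFlagSet D0 g i) ↔
    ∀ i, 1 ≤ i → i ≤ m →
      Module.finrank K (orderFiltration M (g i) ⧸
        (orderFiltration M (g i + 1)).submoduleOf (orderFiltration M (g i))) = 1 := by
  have hgM : ∀ i, 1 ≤ i → i ≤ m → g i ∈ orderSet M := fun i h1 him =>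
    (hM.ge (Or.inr ⟨i, ⟨h1, him⟩, rfl⟩ : g i ∈ DFlagSet D0 g m)).1
  constructor
  · rintro ⟨MM, hmono, rfl, hMM⟩ i h1 him
    rw [finrank_orderFiltration_quotient_eq_one_iff (hgM i h1 him)]
    obtain ⟨i, rfl⟩ := Nat.exists_eq_add_of_le' h1
    have hle : MM i ≤ MM m :=
      monotoneOn_of_le_add_one Set.ordConnected_Iic (fun k _ _ hk => hmono k hk)
        (Set.mem_Iic.2 (by omega)) (Set.mem_Iic.2 le_rfl) (by omega)
    obtain ⟨⟨-, hi0⟩, hiD⟩ := hMM i (by omega)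
    exact notMem_orderSet_maxIdeal_smul_of_le hg hgD him hle hi0 hM hiD
  · intro hrank
    obtain ⟨MM, hmono, hMM⟩ := exists_flag_of_notMem_orderSet_maxIdeal_smul hc h0 hM
      fun i h1 him => (finrank_orderFiltration_quotient_eq_one_iff (hgM i h1 him)).1
        (hrank i h1 him)
    exact ⟨MM, fun i _ => hmono i.le_succ, hMM⟩

end Flags

section Translation

variable {R : Subalgebra ℂ 𝒪} {M : Submodule R 𝒪} {x : 𝒪} {n : ℕ}

lemma ne_zero_and_ord_eq_iff : x ≠ 0 ∧ ord x = n ↔ x.order = n := by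
  constructor
  · rintro ⟨hx, rfl⟩
    obtain ⟨k, hk⟩ := exists_coeff_ne_zero_iff_ne_zero.2 hx
    exact order_eq_nat.2 ⟨Nat.sInf_mem (s := {k | coeff k x ≠ 0}) ⟨k, hk⟩,
      fun i hi => not_not.1 (Nat.notMem_of_lt_sInf hi)⟩
  · intro h
    obtain ⟨hn, hlt⟩ := order_eq_nat.1 h
    refine ⟨fun hx => hn (by rw [hx, map_zero]), le_antisymm (Nat.sInf_le hn) ?_⟩
    exact le_csInf ⟨n, hn⟩ fun k hk => not_lt.1 fun hkn => hk (hlt k hkn)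

lemma eq_zero_or_ord_pos_iff : x = 0 ∨ 0 < ord x ↔ X ∣ x := by
  have h : ¬ (x ≠ 0 ∧ ord x = 0) ↔ X ∣ x := by
    rw [ne_zero_and_ord_eq_iff, order_eq_iff_X_pow_dvd, pow_zero, zero_add, pow_one]
    simp
  rw [← h, not_and_or, not_not, Nat.pos_iff_ne_zero]

lemma SGamma_eq_orderSet : SGamma R = orderSet R := by
  simp only [SGamma, orderSet, ne_zero_and_ord_eq_iff]

lemma DeltaM_eq_orderSet : DeltaM R M = orderSet M := by
  simp only [DeltaM, orderSet, ne_zero_and_ord_eq_iff]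

lemma Dset_eq_sdiff : Dset R M = orderSet M \ orderSet R := by
  rw [Dset, Gaps, DeltaM_eq_orderSet, SGamma_eq_orderSet, Set.sdiff_eq]

lemma isStd_iff : IsStd R M ↔ M.FG ∧ 0 ∈ orderSet M := by
  rw [← DeltaM_eq_orderSet]
  rfl

lemma zO_eq : zO n = (orderGE R n).restrictScalars ℂ := by
  ext x
  rw [Submodule.restrictScalars_mem, mem_orderGE, dvd_def, zO, LinearMap.mem_range]
  simp only [LinearMap.mulLeft_apply, eq_comm]

lemma mSmul_eq : mSmul R M = (maxIdeal R • M).restrictScalars ℂ := by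
  refine le_antisymm (Submodule.span_le.2 ?_) fun z hz => ?_
  · rintro _ ⟨r, hr, y, hy, hr0, rfl⟩
    have hrm : (⟨r, hr⟩ : R) ∈ maxIdeal R := mem_maxIdeal.2 (eq_zero_or_ord_pos_iff.1 hr0)
    rw [SetLike.mem_coe, Submodule.restrictScalars_mem]
    exact Submodule.smul_mem_smul hrm hy
  · rw [Submodule.restrictScalars_mem] at hz
    refine Submodule.smul_induction_on hz (fun r hr y hy => ?_) fun x y hx hy => add_mem hx hy
    exact Submodule.subset_span
      ⟨r, r.2, y, hy, eq_zero_or_ord_pos_iff.2 (mem_maxIdeal.1 hr), rfl⟩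

lemma inf_zO_sup_mSmul_eq_orderFiltration :
    M.restrictScalars ℂ ⊓ zO n ⊔ mSmul R M = orderFiltration M n := by
  rw [zO_eq (R := R), mSmul_eq, orderFiltration, Submodule.restrictScalars_sup,
    Submodule.restrictScalars_inf]

end Translation

/-- For `𝓜_top` a standard module with `D_{𝓜_top} = D_m`: a flag of standard
modules `𝓜_0 ⊆ … ⊆ 𝓜_m = 𝓜_top` realizing the `D`-flag exists if and only if
`dim_ℂ(𝓜̄^{(g_i)}/𝓜̄^{(g_i+1)}) = 1` for every `1 ≤ i ≤ m`. -/
theorem statement9 (R : Subalgebra ℂ 𝒪) (c : ℕ) (hR : HasConductor R c)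
    (m : ℕ) (D0 : Set ℕ) (g : ℕ → ℕ) (hflag : IsDFlag R m D0 g)
    (Mtop : Submodule ↥R 𝒪) (hstd : IsStd R Mtop)
    (hDm : Dset R Mtop = DFlagSet D0 g m) :
    (∃ MM : ℕ → Submodule ↥R 𝒪,
      (∀ i, i < m → MM i ≤ MM (i+1)) ∧ MM m = Mtop ∧
      ∀ i ≤ m, IsStd R (MM i) ∧ Dset R (MM i) = DFlagSet D0 g i) ↔
    (∀ i, 1 ≤ i → i ≤ m →
      quotDim (((Mtop.restrictScalars ℂ) ⊓ zO (g i)) ⊔ mSmul R Mtop)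
              (((Mtop.restrictScalars ℂ) ⊓ zO (g i + 1)) ⊔ mSmul R Mtop) = 1) := by
  simp only [isStd_iff, Dset_eq_sdiff, inf_zO_sup_mSmul_eq_orderFiltration] at hstd hDm ⊢
  exact statement9_general hR.2.1 hflag.2.1 (fun i h1 him => (hflag.2.2.1 i h1 him).2) hstd.2 hDm

end
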